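/- Let η ∈ S₅ be the longest permutation, η(i) = 6 − i for all i (complete notation [54321]). The set BL_η ⊂ Lo¹₅ (naturally identified with the intersection of two open big Bruhat cells in general position) has exactly 52 connected components, and every connected component of BL_η is contractible. -/

import Mathlib

open Matrix

/-- The group `Lo¹_m` of real lower triangular `m × m` matrices with
all diagonal entries equal to `1`, viewed as a subset of the matrix space. -/
def Lo1 (m : ℕ) : Set (Matrix (Fin m) (Fin m) ℝ) :=
  {L | (∀ i, L i i = 1) ∧ ∀ i j : Fin m, i < j → L i j = 0}

/-- The set of invertible real upper triangular `m × m` matrices. -/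
def UpInv (m : ℕ) : Set (Matrix (Fin m) (Fin m) ℝ) :=
  {U | (∀ i j : Fin m, j < i → U i j = 0) ∧ IsUnit U.det}

/-- The permutation matrix of `σ`, with `(P_σ)_{i, σ(i)} = 1` and `0` otherwise. -/
def permMat (m : ℕ) (σ : Equiv.Perm (Fin m)) : Matrix (Fin m) (Fin m) ℝ :=
  fun i j => if σ i = j then 1 else 0

/-- The Bruhat cell `Bru_σ^GL = { U₀ P_σ U₁ : U₀, U₁ upper triangular invertible }`. -/
def Bru (m : ℕ) (σ : Equiv.Perm (Fin m)) : Set (Matrix (Fin m) (Fin m) ℝ) :=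
  {M | ∃ U₀ ∈ UpInv m, ∃ U₁ ∈ UpInv m, M = U₀ * permMat m σ * U₁}

/-- `BL_σ = Lo¹ ∩ Bru_σ^GL`. -/
def BL (m : ℕ) (σ : Equiv.Perm (Fin m)) : Set (Matrix (Fin m) (Fin m) ℝ) :=
  Lo1 m ∩ Bru m σ

/-- The longest permutation `η = [54321] ∈ S₅`, `η(i) = 6 − i`
(here `0`-indexed on `Fin 5`). -/
def η5 : Equiv.Perm (Fin 5) :=
  ⟨![4, 3, 2, 1, 0], ![4, 3, 2, 1, 0], by decide, by decide⟩

open Topology in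
/-- A space split into finitely many open contractible pieces. -/
lemma count_lemma {X V : Type*} [TopologicalSpace X] [TopologicalSpace V] (e : X → V)
    (he : IsEmbedding e) {ι : Type*} [Fintype ι] (B : ι → Set V) (hopen : ∀ i, IsOpen (B i))
    (hdisj : ∀ i j x, x ∈ B i → x ∈ B j → i = j) (hcov : ∀ x, ∃ i, e x ∈ B i)
    (hr : ∀ i, B i ⊆ Set.range e) (hc : ∀ i, ContractibleSpace (B i)) :
    Nat.card (ConnectedComponents X) = Fintype.card ι ∧
      ∀ x : X, ContractibleSpace (connectedComponent x) := by
  classical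
  choose f hf using hcov
  have hA : ∀ i, ContractibleSpace (e ⁻¹' (B i)) := by
    intro i
    have h1 := he.homeomorphImage (e ⁻¹' (B i))
    have h2 : e '' (e ⁻¹' (B i)) = B i := by
      rw [Set.image_preimage_eq_inter_range, Set.inter_eq_left.2 (hr i)]
    have := hc i
    exact (h1.trans (Homeomorph.setCongr h2)).contractibleSpace
  have hfi : ∀ i, f ⁻¹' {i} = e ⁻¹' (B i) := by
    intro i
    ext x
    simp only [Set.mem_preimage, Set.mem_singleton_iff]
    exact ⟨fun h => h ▸ hf x, fun h => hdisj _ _ _ (hf x) h⟩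
  let : TopologicalSpace ι := ⊥
  have : DiscreteTopology ι := ⟨rfl⟩
  have hfc : Continuous f := by
    rw [continuous_discrete_rng]
    intro i
    rw [hfi]
    exact (hopen i).preimage he.continuous
  have hcc : ∀ x, connectedComponent x = e ⁻¹' (B (f x)) := by
    intro x
    apply Set.Subset.antisymm
    · rw [← hfi]
      exact IsClopen.connectedComponent_subset ((isClopen_discrete _).preimage hfc) rfl
    · have := hA (f x)
      exact (isPreconnected_iff_preconnectedSpace.2 inferInstance).subset_connectedComponent (hf x)
  refine ⟨?_, fun x => ?_⟩
  · rw [← Nat.card_eq_fintype_card]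
    apply Nat.card_eq_of_bijective hfc.connectedComponentsLift
    constructor
    · intro a b
      obtain ⟨a, rfl⟩ := ConnectedComponents.surjective_coe a
      obtain ⟨b, rfl⟩ := ConnectedComponents.surjective_coe b
      intro h
      simp only [Continuous.connectedComponentsLift_apply_coe] at h
      rw [ConnectedComponents.coe_eq_coe, hcc, hcc, h]
    · intro i
      have := hA i
      obtain ⟨x, hx⟩ := (inferInstance : Nonempty (e ⁻¹' (B i)))
      refine ⟨x, ?_⟩
      rw [Continuous.connectedComponentsLift_apply_coe]
      exact hdisj _ _ _ (hf x) hx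
  · rw [hcc]
    exact hA _

/-- Retracts of contractible spaces are contractible. -/
lemma contractible_of_retract {X Y : Type*} [TopologicalSpace X] [TopologicalSpace Y]
    [ContractibleSpace Y] (i : C(X, Y)) (r : C(Y, X)) (h : ∀ x, r (i x) = x) :
    ContractibleSpace X := by
  rw [contractible_iff_id_nullhomotopic]
  have h1 := ((id_nullhomotopic Y).comp_left i).comp_right r
  have h2 : r.comp ((ContinuousMap.id Y).comp i) = ContinuousMap.id X := by
    ext x; exact h x
  rwa [h2] at h1

/-- Set version of `contractible_of_retract`. -/
lemma contractible_of_retractOn {X Y : Type*} [TopologicalSpace X] [TopologicalSpace Y]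
    (S : Set X) (T : Set Y) (hT : ContractibleSpace T) (i : X → Y) (r : Y → X)
    (hi : ContinuousOn i S) (hr : ContinuousOn r T) (hiS : ∀ x ∈ S, i x ∈ T)
    (hrT : ∀ y ∈ T, r y ∈ S) (h : ∀ x ∈ S, r (i x) = x) : ContractibleSpace S :=
  contractible_of_retract (Y := T)
    ⟨fun x => ⟨i x, hiS _ x.2⟩, (continuousOn_iff_continuous_domRestrict.1 hi).subtype_mk _⟩
    ⟨fun x => ⟨r x, hrT _ x.2⟩, (continuousOn_iff_continuous_domRestrict.1 hr).subtype_mk _⟩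
    (fun x => Subtype.ext (h _ x.2))

open Topology in
/-- An open family of nonempty convex sets over a contractible base is contractible. -/
lemma contractible_of_convex_fibers {A F : Type*} [MetricSpace A] [NormedAddCommGroup F]
    [NormedSpace ℝ F] (B : Set (A × F)) (hB : IsOpen B) (W : Set A) (hW : ContractibleSpace W)
    (h1 : ∀ x ∈ B, x.1 ∈ W) (h2 : ∀ a ∈ W, ∃ t, (a, t) ∈ B)
    (h3 : ∀ a ∈ W, Convex ℝ {t | (a, t) ∈ B}) : ContractibleSpace B := by
  obtain ⟨g, hg⟩ := exists_continuous_forall_mem_convex_of_local_const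
    (X := W) (E := F) (t := fun a => {t | ((a : A), t) ∈ B}) (fun a => h3 a a.2) (by
      intro a
      obtain ⟨t, ht⟩ := h2 a a.2
      refine ⟨t, ?_⟩
      have hc : Continuous (fun y : W => ((y : A), t)) := by fun_prop
      exact hc.continuousAt.preimage_mem_nhds (hB.mem_nhds ht))
  rw [contractible_iff_id_nullhomotopic]
  let p : C(B, W) := ⟨fun x => ⟨x.1.1, h1 _ x.2⟩, by fun_prop⟩
  let s : C(W, B) := ⟨fun a => ⟨((a : A), g a), hg a⟩, by fun_prop⟩
  obtain ⟨y, hy⟩ := ((id_nullhomotopic W).comp_left p).comp_right s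
  refine ⟨y, ContinuousMap.Homotopic.trans ?_ hy⟩
  refine ⟨⟨⟨fun q : unitInterval × B =>
    ⟨(q.2.1.1, (1 - (q.1 : ℝ)) • q.2.1.2 + (q.1 : ℝ) • g (p q.2)), ?_⟩, ?_⟩, ?_, ?_⟩⟩
  · have hx := h1 _ q.2.2
    exact h3 _ hx (x := q.2.1.2) q.2.2 (hg (p q.2)) (by linarith [q.1.2.2]) q.1.2.1 (by ring)
  · fun_prop
  · intro x
    simp
  · intro x
    apply Subtype.ext
    simp [p, s]
/-- The unitriangular matrix attached to the ten new coordinates. -/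
def Dmat (α x a d y e b c v w : ℝ) : Matrix (Fin 5) (Fin 5) ℝ :=
  !![1, 0, 0, 0, 0;
     v, 1, 0, 0, 0;
     a, d, 1, 0, 0;
     y, e, -c, 1, 0;
     -(α + b * a + w * y), -(x + b * d + w * e), -b + w * c, -w, 1]

/-- Left multiplier making `Dmat` anti-triangular. -/
def Vmat (α x a d y e b c v w : ℝ) : Matrix (Fin 5) (Fin 5) ℝ :=
  let f1 := α - v * x
  let p2 := -(c * d + e)
  let p1 := -(p2 * v + c * a + y)
  let l1 := -(α + b * a + w * y)
  let l2 := -(x + b * d + w * e)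
  !![f1, x, b, w, 1;
     0, f1 * p2 - p1 * x, f1 * c - p1 * b, f1 - p1 * w, -p1;
     0, 0, y * l2 - e * l1, -(a * l2 - d * l1), a * e - d * y;
     0, 0, 0, l1, -y;
     0, 0, 0, 0, 1]

lemma permMat_mul (U : Matrix (Fin 5) (Fin 5) ℝ) (i j : Fin 5) :
    (permMat 5 η5 * U) i j = U (η5 i) j := by
  simp [Matrix.mul_apply, permMat]

lemma permMat_sq : permMat 5 η5 * permMat 5 η5 = 1 := by
  ext i j
  rw [permMat_mul]
  fin_cases i <;> fin_cases j <;> simp [permMat, η5]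

lemma upInv_of {U : Matrix (Fin 5) (Fin 5) ℝ} (h : ∀ i j : Fin 5, j < i → U i j = 0)
    (hd : U 0 0 * U 1 1 * U 2 2 * U 3 3 * U 4 4 ≠ 0) : U ∈ UpInv 5 := by
  refine ⟨h, ?_⟩
  rw [Matrix.det_of_isUpperTriangular (fun i j hij => h i j hij), Fin.prod_univ_five]
  exact isUnit_iff_ne_zero.2 hd

lemma upInv_diag {U : Matrix (Fin 5) (Fin 5) ℝ} (h : U ∈ UpInv 5) (i : Fin 5) : U i i ≠ 0 := by
  obtain ⟨h1, h2⟩ := h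
  rw [Matrix.det_of_isUpperTriangular (fun i j hij => h1 i j hij), isUnit_iff_ne_zero] at h2
  exact Finset.prod_ne_zero_iff.1 h2 i (Finset.mem_univ _)

lemma upInv_inv {U : Matrix (Fin 5) (Fin 5) ℝ} (h : U ∈ UpInv 5) : U⁻¹ ∈ UpInv 5 := by
  obtain ⟨h1, h2⟩ := h
  let _ : Invertible U := Matrix.invertibleOfIsUnitDet U h2
  refine ⟨fun i j hij => ?_, ?_⟩
  · exact Matrix.blockTriangular_inv_of_blockTriangular (M := U) (b := id)
      (fun i j hij => h1 i j hij) hij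
  · exact (Matrix.isUnit_nonsing_inv_det_iff).2 h2

lemma dmat_mem_bru {α x a d y e b c v w : ℝ} (h1 : α - v * x ≠ 0) (h2 : α + a * b + w * y ≠ 0)
    (h3 : (y * x - e * α) + b * (y * d - e * a) ≠ 0)
    (h4 : (y * x - e * α) + c * (a * x - d * α) ≠ 0) :
    Dmat α x a d y e b c v w ∈ Bru 5 η5 := by
  have hV : Vmat α x a d y e b c v w ∈ UpInv 5 := by
    apply upInv_of
    · intro i j
      fin_cases i <;> fin_cases j <;> simp [Vmat]
    · have : (α - v * x) * ((y * x - e * α) + c * (a * x - d * α)) *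
        ((y * x - e * α) + b * (y * d - e * a)) * (α + a * b + w * y) ≠ 0 := by
        simp only [mul_ne_zero_iff]; tauto
      intro h
      apply this
      rw [← h]
      simp [Vmat]
      ring
  refine ⟨_, upInv_inv hV, permMat 5 η5 * (Vmat α x a d y e b c v w * Dmat α x a d y e b c v w),
    ?_, ?_⟩
  · apply upInv_of
    · intro i j
      rw [permMat_mul]
      fin_cases i <;> fin_cases j <;> simp [Vmat, Dmat, η5, Matrix.mul_apply, Fin.sum_univ_five] <;> ring
    · simp only [permMat_mul]
      have : (α + a * b + w * y) * ((y * x - e * α) + b * (y * d - e * a)) *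
        ((y * x - e * α) + c * (a * x - d * α)) * (α - v * x) ≠ 0 := by
        simp only [mul_ne_zero_iff]; tauto
      intro h
      apply this
      rw [← h]
      simp [Vmat, Dmat, η5, Matrix.mul_apply, Fin.sum_univ_five]
      ring
  · rw [Matrix.mul_assoc, ← Matrix.mul_assoc (permMat 5 η5), permMat_sq, Matrix.one_mul,
      Matrix.nonsing_inv_mul_cancel_left _ _ hV.2]

lemma bru_dmat {α x a d y e b c v w : ℝ} (h : Dmat α x a d y e b c v w ∈ Bru 5 η5) :
    (α - v * x ≠ 0) ∧ (α + a * b + w * y ≠ 0) ∧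
    ((y * x - e * α) + b * (y * d - e * a) ≠ 0) ∧
    ((y * x - e * α) + c * (a * x - d * α) ≠ 0) := by
  obtain ⟨U, hU, U1, hU1, hD⟩ := h
  rw [Matrix.mul_assoc] at hD
  set T := permMat 5 η5 * U1 with hT
  have hu := hU.1
  have ht : ∀ i j : Fin 5, j < η5 i → T i j = 0 := by
    intro i j hij
    rw [hT, permMat_mul]
    exact hU1.1 _ _ hij
  have t1 : ∀ i, T i (η5 i) ≠ 0 := by
    intro i
    rw [hT, permMat_mul]
    exact upInv_diag hU1 _
  have u1 := upInv_diag hU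
  have key : ∀ g : Fin 5 → ℝ, Matrix.vecMul g (Dmat α x a d y e b c v w) =
      Matrix.vecMul (Matrix.vecMul g U) T := by
    intro g; rw [hD, Matrix.vecMul_vecMul]
  have t40 : T 4 0 ≠ 0 := t1 4
  have t31 : T 3 1 ≠ 0 := t1 3
  have t22 : T 2 2 ≠ 0 := t1 2
  have z00 : T 0 0 = 0 := ht _ _ (by decide)
  have z10 : T 1 0 = 0 := ht _ _ (by decide)
  have z20 : T 2 0 = 0 := ht _ _ (by decide)
  have z30 : T 3 0 = 0 := ht _ _ (by decide)
  have z01 : T 0 1 = 0 := ht _ _ (by decide)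
  have z11 : T 1 1 = 0 := ht _ _ (by decide)
  have z21 : T 2 1 = 0 := ht _ _ (by decide)
  have z02 : T 0 2 = 0 := ht _ _ (by decide)
  have z12 : T 1 2 = 0 := ht _ _ (by decide)
  have z03 : T 0 3 = 0 := ht _ _ (by decide)
  have y10 : U 1 0 = 0 := hu _ _ (by decide)
  have y20 : U 2 0 = 0 := hu _ _ (by decide)
  have y30 : U 3 0 = 0 := hu _ _ (by decide)
  have y40 : U 4 0 = 0 := hu _ _ (by decide)
  have y21 : U 2 1 = 0 := hu _ _ (by decide)
  have y31 : U 3 1 = 0 := hu _ _ (by decide)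
  have y41 : U 4 1 = 0 := hu _ _ (by decide)
  have y32 : U 3 2 = 0 := hu _ _ (by decide)
  have y42 : U 4 2 = 0 := hu _ _ (by decide)
  have y43 : U 4 3 = 0 := hu _ _ (by decide)
  have ent : ∀ i j, Dmat α x a d y e b c v w i j =
      U i 0 * T 0 j + U i 1 * T 1 j + U i 2 * T 2 j + U i 3 * T 3 j + U i 4 * T 4 j := by
    intro i j; rw [hD, Matrix.mul_apply, Fin.sum_univ_five]
  have e40 : -(α + b * a + w * y) = U 4 4 * T 4 0 := by
    have := ent 4 0; simp [Dmat, z00, z10, z20, z30] at this ⊢; linarith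
  have e41 : -(x + b * d + w * e) = U 4 4 * T 4 1 := by
    have := ent 4 1; simp [Dmat, z01, z11, z21, y43] at this ⊢; linarith
  have e30 : y = U 3 4 * T 4 0 := by
    have := ent 3 0; simp [Dmat, z00, z10, z20, z30] at this ⊢; linarith
  have e31 : e = U 3 3 * T 3 1 + U 3 4 * T 4 1 := by
    have := ent 3 1; simp [Dmat, z01, z11, z21] at this ⊢; linarith
  -- the row `φ`
  have kphi := key ![α - v * x, x, b, w, 1]
  have kpsi := key ((α - v * x) • ![-(-(c * d + e) * v + c * a + y), -(c * d + e), c, 1, 0]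
      - (-(-(c * d + e) * v + c * a + y)) • ![α - v * x, x, b, w, 1])
  generalize hg : Matrix.vecMul ![α - v * x, x, b, w, 1] U = g at kphi
  generalize hm : Matrix.vecMul ((α - v * x) •
    ![-(-(c * d + e) * v + c * a + y), -(c * d + e), c, 1, 0]
      - (-(-(c * d + e) * v + c * a + y)) • ![α - v * x, x, b, w, 1]) U = m at kpsi
  have hv : ∀ (g : Fin 5 → ℝ) (M : Matrix (Fin 5) (Fin 5) ℝ) j, Matrix.vecMul g M j =
      g 0 * M 0 j + g 1 * M 1 j + g 2 * M 2 j + g 3 * M 3 j + g 4 * M 4 j := by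
    intro g M j; simp [Matrix.vecMul, dotProduct, Fin.sum_univ_five]
  have g0 : g 0 = (α - v * x) * U 0 0 := by
    rw [← hg, hv]; simp [y10, y20, y30, y40]
  have m0 : m 0 = 0 := by
    rw [← hm, hv]; simp [y10, y20, y30, y40]; left; ring
  have m1 : m 1 = ((y * x - e * α) + c * (a * x - d * α)) * U 1 1 := by
    rw [← hm, hv]; simp [y21, y31, y41]; ring
  have pg : ∀ j, _ := fun j => congrFun kphi j
  have pm : ∀ j, _ := fun j => congrFun kpsi j
  simp only [hv] at pg pm
  have g4 : g 4 = 0 := by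
    have := pg 0
    simp [Dmat, z00, z10, z20, z30] at this
    have h : g 4 * T 4 0 = 0 := by rw [← this]; ring
    exact (mul_eq_zero.1 h).resolve_right t40
  have g3 : g 3 = 0 := by
    have := pg 1
    simp [Dmat, z01, z11, z21, g4] at this
    exact this.resolve_right t31
  have g2 : g 2 = 0 := by
    have := pg 2
    simp [Dmat, z02, z12, g4, g3] at this
    have h : g 2 * T 2 2 = 0 := by rw [← this]; ring
    exact (mul_eq_zero.1 h).resolve_right t22
  have g1 : g 1 = 0 := by
    have := pg 3
    simp [Dmat, z03, g4, g3, g2] at this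
    exact this.resolve_right (t1 1)
  have f1 : α - v * x ≠ 0 := by
    have := pg 4
    simp [Dmat, g4, g3, g2, g1] at this
    intro h
    rw [g0, h] at this
    simp at this
  have m4 : m 4 = 0 := by
    have := pm 0
    simp [Dmat, z00, z10, z20, z30] at this
    have h : m 4 * T 4 0 = 0 := by rw [← this]; ring
    exact (mul_eq_zero.1 h).resolve_right t40
  have m3 : m 3 = 0 := by
    have := pm 1
    simp [Dmat, z01, z11, z21, m4] at this
    have h : m 3 * T 3 1 = 0 := by rw [← this]; ring
    exact (mul_eq_zero.1 h).resolve_right t31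
  have m2 : m 2 = 0 := by
    have := pm 2
    simp [Dmat, z02, z12, m4, m3] at this
    have h : m 2 * T 2 2 = 0 := by rw [← this]; ring
    exact (mul_eq_zero.1 h).resolve_right t22
  refine ⟨f1, ?_, ?_, ?_⟩
  · intro h
    have h' : U 4 4 * T 4 0 = 0 := by rw [← e40]; linarith
    exact mul_ne_zero (u1 4) t40 h'
  · have : (y * x - e * α) + b * (y * d - e * a) = U 3 3 * T 3 1 * (U 4 4 * T 4 0) := by
      have l1 : (y * x - e * α) + b * (y * d - e * a) =
        -(α + b * a + w * y) * e - y * (-(x + b * d + w * e)) := by ring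
      rw [l1, e40, e41]
      nth_rewrite 1 [e30, e31]
      ring
    rw [this]
    exact mul_ne_zero (mul_ne_zero (u1 3) t31) (mul_ne_zero (u1 4) t40)
  · intro h
    have := pm 3
    rw [m1, h] at this
    simp [Dmat, m4, m3, m2, m0] at this
    apply f1
    rw [← this]
    ring
/-- The sign of a Boolean. -/
def sg (b : Bool) : ℝ := if b then 1 else -1

/-- Index type of the components for given normalised signs. -/
abbrev J := (Option Bool) ⊕ (Bool ⊕ (Bool × Bool)) ⊕ (Bool × Bool)

noncomputable def CX (φ P : ℝ) : ℝ := P ^ 2 * (1 - Real.sin φ)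
noncomputable def CY (φ Q : ℝ) : ℝ := Q ^ 2 * (1 + Real.sin φ)
noncomputable def kp (φ : ℝ) : ℝ := Real.cos (φ / 2) + Real.sin (φ / 2)
noncomputable def lm (φ : ℝ) : ℝ := Real.cos (φ / 2) - Real.sin (φ / 2)

def G0 (φ P Q : ℝ) : Prop := -(3 * Real.pi / 2) < φ ∧ φ < 3 * Real.pi / 2 ∧
  (φ < Real.pi / 2 ∨ CX φ P < CY φ Q) ∧ (-(Real.pi / 2) < φ ∨ CY φ Q < CX φ P)
def G1 (φ P Q : ℝ) : Prop := Real.pi / 2 < φ ∧ (3 * Real.pi / 2 < φ ∨ CY φ Q < CX φ P)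
def G3 (φ P Q : ℝ) : Prop := -(Real.pi / 2) < φ ∧ (Real.pi / 2 < φ ∨ CX φ P < CY φ Q) ∧
  (φ < 3 * Real.pi / 2 ∨ CY φ Q < CX φ P)
def G5 (b : Bool) (φ P Q : ℝ) : Prop := 3 * Real.pi / 2 < φ ∧ CX φ P < CY φ Q ∧ 0 < sg b * Q
def G9 (e b : Bool) (φ P Q : ℝ) : Prop := 0 < sg b * (Q * |kp φ| - sg e * (P * |lm φ|))

def G : J → ℝ → ℝ → ℝ → Prop
  | .inl none, φ, P, Q => G0 φ P Q
  | .inl (some true), φ, P, Q => G1 φ P Q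
  | .inl (some false), φ, P, Q => G1 (-φ) Q P
  | .inr (.inl (.inl true)), φ, P, Q => G3 φ P Q
  | .inr (.inl (.inl false)), φ, P, Q => G3 (-φ) Q P
  | .inr (.inl (.inr (true, b))), φ, P, Q => G5 b φ P Q
  | .inr (.inl (.inr (false, b))), φ, P, Q => G5 b (-φ) Q P
  | .inr (.inr (e, b)), φ, P, Q => G9 e b φ P Q

def eps : J → Bool
  | .inl _ => true
  | .inr (.inl _) => false
  | .inr (.inr (e, _)) => e

def kap : J → Bool
  | .inl _ => true
  | .inr (.inl _) => true
  | .inr (.inr _) => false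

def R (e k : Bool) (φ P Q : ℝ) : Prop :=
  (0 < sg e * Real.cos φ ∨ P * lm φ + Q * kp φ ≠ 0) ∧
  (0 < sg e * sg k * Real.cos φ ∨ Q * kp φ - P * lm φ ≠ 0)

lemma cos_eq_kl (φ : ℝ) : Real.cos φ = kp φ * lm φ := by
  have : φ = 2 * (φ / 2) := by ring
  rw [this, Real.cos_two_mul']
  simp only [kp, lm]
  rw [show 2 * (φ / 2) / 2 = φ / 2 by ring]
  ring

lemma kp_sq (φ : ℝ) : kp φ ^ 2 = 1 + Real.sin φ := by
  have h : Real.sin φ = 2 * Real.sin (φ / 2) * Real.cos (φ / 2) := by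
    rw [← Real.sin_two_mul]; congr 1; ring
  have := Real.sin_sq_add_cos_sq (φ / 2)
  rw [h, kp]; linarith

lemma lm_sq (φ : ℝ) : lm φ ^ 2 = 1 - Real.sin φ := by
  have h : Real.sin φ = 2 * Real.sin (φ / 2) * Real.cos (φ / 2) := by
    rw [← Real.sin_two_mul]; congr 1; ring
  have := Real.sin_sq_add_cos_sq (φ / 2)
  rw [h, lm]; linarith

lemma CX_nonneg (φ P : ℝ) : 0 ≤ CX φ P := by
  unfold CX; rw [← lm_sq]; positivity
lemma CY_nonneg (φ P : ℝ) : 0 ≤ CY φ P := by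
  unfold CY; rw [← kp_sq]; positivity

lemma CX_neg (φ P : ℝ) : CX (-φ) P = CY φ P := by simp [CX, CY]
lemma CY_neg (φ P : ℝ) : CY (-φ) P = CX φ P := by simp [CX, CY]; left; ring

lemma R_true (e : Bool) (φ P Q : ℝ) :
    R e true φ P Q ↔ (0 < sg e * Real.cos φ ∨ CX φ P ≠ CY φ Q) := by
  have h : CY φ Q - CX φ P = (P * lm φ + Q * kp φ) * (Q * kp φ - P * lm φ) := by
    unfold CX CY; rw [← kp_sq, ← lm_sq]; ring
  have h2 : CX φ P ≠ CY φ Q ↔ (P * lm φ + Q * kp φ ≠ 0 ∧ Q * kp φ - P * lm φ ≠ 0) := by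
    rw [← mul_ne_zero_iff, ← h, sub_ne_zero, ne_comm]
  rw [h2]
  unfold R
  simp only [sg, if_true, mul_one]
  tauto

lemma not_both (φ : ℝ) : kp φ ≠ 0 ∨ lm φ ≠ 0 := by
  by_contra h
  push Not at h
  have h1 := kp_sq φ
  have h2 := lm_sq φ
  rw [h.1] at h1
  rw [h.2] at h2
  linarith

lemma R_false (e : Bool) (φ P Q : ℝ) :
    R e false φ P Q ↔ Q * |kp φ| - sg e * (P * |lm φ|) ≠ 0 := by
  unfold R
  rw [cos_eq_kl]
  have h0 := not_both φ
  generalize kp φ = k at *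
  generalize lm φ = l at *
  have aux : ∀ A B : ℝ, (A + B ≠ 0 ↔ B + A ≠ 0) := fun A B => by rw [add_comm]
  rcases lt_trichotomy k 0 with hk | hk | hk <;> rcases lt_trichotomy l 0 with hl | hl | hl
  all_goals first
    | (exfalso; subst hk; subst hl; simp at h0; done)
    | skip
  all_goals
    first
    | (have hkl := mul_pos_of_neg_of_neg hk hl)
    | (have hkl := mul_neg_of_neg_of_pos hk hl)
    | (have hkl := mul_neg_of_pos_of_neg hk hl)
    | (have hkl := mul_pos hk hl)
    | skip
  all_goals
    try rw [abs_of_neg hk]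
    try rw [abs_of_pos hk]
    try rw [abs_of_neg hl]
    try rw [abs_of_pos hl]
    try rw [hk]
    try rw [hl]
    cases e <;> simp [sg] <;> grind

lemma cos_regions {φ : ℝ} (h1 : -(2 * Real.pi) < φ) (h2 : φ < 2 * Real.pi) :
    (-(Real.pi / 2) < φ → φ < Real.pi / 2 → 0 < Real.cos φ) ∧
    (3 * Real.pi / 2 < φ → 0 < Real.cos φ) ∧
    (φ < -(3 * Real.pi / 2) → 0 < Real.cos φ) ∧
    (Real.pi / 2 < φ → φ < 3 * Real.pi / 2 → Real.cos φ < 0) ∧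
    (φ < -(Real.pi / 2) → -(3 * Real.pi / 2) < φ → Real.cos φ < 0) ∧
    (φ = Real.pi / 2 → Real.cos φ = 0 ∧ ∀ P, CX φ P = 0) ∧
    (φ = -(Real.pi / 2) → Real.cos φ = 0 ∧ ∀ P, CY φ P = 0) ∧
    (φ = 3 * Real.pi / 2 → Real.cos φ = 0 ∧ ∀ P, CY φ P = 0) ∧
    (φ = -(3 * Real.pi / 2) → Real.cos φ = 0 ∧ ∀ P, CX φ P = 0) := by
  have hs : Real.sin (3 * Real.pi / 2) = -1 := by
    rw [show 3 * Real.pi / 2 = Real.pi / 2 + Real.pi by ring, Real.sin_add_pi, Real.sin_pi_div_two]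
  have hc : Real.cos (3 * Real.pi / 2) = 0 := by
    rw [show 3 * Real.pi / 2 = Real.pi / 2 + Real.pi by ring, Real.cos_add_pi, Real.cos_pi_div_two,
      neg_zero]
  refine ⟨fun a b => Real.cos_pos_of_mem_Ioo ⟨by linarith, b⟩, fun a => ?_, fun a => ?_,
    fun a b => ?_, fun a b => ?_, ?_, ?_, ?_, ?_⟩
  · rw [← Real.cos_sub_two_pi]
    exact Real.cos_pos_of_mem_Ioo ⟨by linarith, by linarith⟩
  · rw [← Real.cos_add_two_pi]
    exact Real.cos_pos_of_mem_Ioo ⟨by linarith, by linarith⟩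
  · exact Real.cos_neg_of_pi_div_two_lt_of_lt a (by linarith)
  · rw [← Real.cos_neg]
    exact Real.cos_neg_of_pi_div_two_lt_of_lt (by linarith) (by linarith)
  · rintro rfl; simp [CX]
  · rintro rfl; simp [CY]
  · rintro rfl; simp [CY, hs, hc]
  · rintro rfl; simp [CX, Real.cos_neg, hs, hc]

lemma sg_cases (b : Bool) : (b = true ∧ sg b = 1) ∨ (b = false ∧ sg b = -1) := by
  cases b <;> simp [sg]

lemma G_cover {e k : Bool} {φ P Q : ℝ} (h1 : -(2 * Real.pi) < φ) (h2 : φ < 2 * Real.pi)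
    (h : R e k φ P Q) : ∃ j, eps j = e ∧ kap j = k ∧ G j φ P Q := by
  have hp := Real.pi_pos
  cases k
  · rw [R_false] at h
    rcases lt_or_gt_of_ne h with h | h
    · exact ⟨.inr (.inr (e, false)), rfl, rfl, by simp only [G, G9, sg]; simp [sg] at h ⊢; linarith⟩
    · exact ⟨.inr (.inr (e, true)), rfl, rfl, by simp only [G, G9, sg]; simp [sg] at h ⊢; linarith⟩
  · rw [R_true] at h
    obtain ⟨c1, c2, c3, c4, c5, c6, c7, c8, c9⟩ := cos_regions h1 h2
    have x0 := CX_nonneg φ P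
    have y0 := CY_nonneg φ Q
    cases e
    · simp only [sg] at h
      have hQ : Q ≠ 0 ∨ CY φ Q = 0 := by
        by_cases hQ : Q = 0
        · right; simp [CY, hQ]
        · left; exact hQ
      have hP : P ≠ 0 ∨ CX φ P = 0 := by
        by_cases hP : P = 0
        · right; simp [CX, hP]
        · left; exact hP
      by_cases g3 : G3 φ P Q
      · exact ⟨.inr (.inl (.inl true)), rfl, rfl, g3⟩
      by_cases g4 : G3 (-φ) Q P
      · exact ⟨.inr (.inl (.inl false)), rfl, rfl, g4⟩
      by_cases g5 : 3 * Real.pi / 2 < φ ∧ CX φ P < CY φ Q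
      · rcases lt_trichotomy Q 0 with q | q | q
        · exact ⟨.inr (.inl (.inr (true, false))), rfl, rfl, g5.1, g5.2, by simp [sg]; exact q⟩
        · grind
        · exact ⟨.inr (.inl (.inr (true, true))), rfl, rfl, g5.1, g5.2, by simp [sg]; exact q⟩
      by_cases g6 : φ < -(3 * Real.pi / 2) ∧ CY φ Q < CX φ P
      · rcases lt_trichotomy P 0 with q | q | q
        · exact ⟨.inr (.inl (.inr (false, false))), rfl, rfl, by linarith [g6.1],
            by rw [CX_neg, CY_neg]; exact g6.2, by simp [sg]; exact q⟩
        · grind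
        · exact ⟨.inr (.inl (.inr (false, true))), rfl, rfl, by linarith [g6.1],
            by rw [CX_neg, CY_neg]; exact g6.2, by simp [sg]; exact q⟩
      exfalso
      simp only [G3, CX_neg, CY_neg] at g3 g4
      grind
    · simp only [sg] at h
      by_cases g3 : G0 φ P Q
      · exact ⟨.inl none, rfl, rfl, g3⟩
      by_cases g4 : G1 φ P Q
      · exact ⟨.inl (some true), rfl, rfl, g4⟩
      by_cases g5 : G1 (-φ) Q P
      · exact ⟨.inl (some false), rfl, rfl, g5⟩
      exfalso
      simp only [G0, G1, CX_neg, CY_neg] at g3 g4 g5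
      simp only [if_true, one_mul] at h
      rcases lt_trichotomy φ (Real.pi / 2) with r1 | r1 | r1 <;>
      rcases lt_trichotomy φ (-(Real.pi / 2)) with r2 | r2 | r2 <;>
      rcases lt_trichotomy φ (3 * Real.pi / 2) with r3 | r3 | r3 <;>
      rcases lt_trichotomy φ (-(3 * Real.pi / 2)) with r4 | r4 | r4 <;>
      first
      | (exfalso; linarith)
      | grind

lemma G_R {j : J} {φ P Q : ℝ} (h1 : -(2 * Real.pi) < φ) (h2 : φ < 2 * Real.pi)
    (h : G j φ P Q) : R (eps j) (kap j) φ P Q := by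
  have hp := Real.pi_pos
  obtain ⟨c1, c2, c3, c4, c5, c6, c7, c8, c9⟩ := cos_regions h1 h2
  have x0 := CX_nonneg φ P
  have y0 := CY_nonneg φ Q
  rcases j with (_ | _ | _) | ((_ | _) | ⟨_ | _, b⟩) | ⟨e, b⟩
  all_goals simp only [eps, kap, R_true, R_false]
  all_goals simp only [G, G0, G1, G3, G5, G9, CX_neg, CY_neg] at h
  all_goals first
    | (intro h'; rw [h'] at h; simp at h; done)
    | (simp [sg]; grind; done)

lemma G_disj {i j : J} {φ P Q : ℝ} (hi : G i φ P Q) (hj : G j φ P Q) (he : eps i = eps j)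
    (hk : kap i = kap j) : i = j := by
  have hp := Real.pi_pos
  rcases i with (_ | _ | _) | ((_ | _) | ⟨_ | _, b⟩) | ⟨e, b⟩ <;>
  rcases j with (_ | _ | _) | ((_ | _) | ⟨_ | _, b'⟩) | ⟨e', b'⟩ <;>
  simp only [eps, kap, reduceCtorEq] at he hk <;>
  simp only [G, G0, G1, G3, G5, CX_neg, CY_neg] at hi hj
  all_goals first
    | rfl
    | (exfalso; grind; done)
    | skip
  · have : b = b' := by cases b <;> cases b' <;> simp [sg] at hi hj ⊢ <;> linarith
    rw [this]
  · have : b = b' := by cases b <;> cases b' <;> simp [sg] at hi hj ⊢ <;> linarith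
    rw [this]
  · subst he
    have : b = b' := by
      unfold G9 at hi hj
      generalize Q * |kp φ| - sg e * (P * |lm φ|) = z at *
      cases b <;> cases b' <;> simp [sg] at hi hj ⊢ <;> linarith
    rw [this]

/-- Logarithmic coordinates. -/
abbrev AC := (ℂ × ℂ) × ℂ

/-- The subset of the logarithmic coordinate space attached to a region. -/
def Oset (g : ℝ → ℝ → ℝ → Prop) : Set AC :=
  {x | |x.1.1.im| < Real.pi ∧ |x.1.2.im| < Real.pi ∧
    g (x.1.1.im - x.1.2.im) (x.2.re + x.2.im) (x.2.re - x.2.im)}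

lemma G_isOpen (j : J) : IsOpen {z : ℝ × ℝ × ℝ | G j z.1 z.2.1 z.2.2} := by
  have hCX : Continuous fun z : ℝ × ℝ × ℝ => CX z.1 z.2.1 := by unfold CX; fun_prop
  have hCY : Continuous fun z : ℝ × ℝ × ℝ => CY z.1 z.2.2 := by unfold CY; fun_prop
  have hk : Continuous fun z : ℝ × ℝ × ℝ => kp z.1 := by unfold kp; fun_prop
  have hl : Continuous fun z : ℝ × ℝ × ℝ => lm z.1 := by unfold lm; fun_prop
  rcases j with (_ | _ | _) | ((_ | _) | ⟨_ | _, b⟩) | ⟨e, b⟩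
  all_goals
    simp only [G, G0, G1, G3, G5, G9, CX_neg, CY_neg, Set.ofPred_and, Set.ofPred_or]
    repeat' first
      | apply IsOpen.inter
      | apply IsOpen.union
      | apply isOpen_lt
  all_goals fun_prop

lemma Oset_isOpen (j : J) : IsOpen (Oset (G j)) := by
  have h : IsOpen ((fun x : AC => (x.1.1.im - x.1.2.im, x.2.re + x.2.im, x.2.re - x.2.im)) ⁻¹'
      {z : ℝ × ℝ × ℝ | G j z.1 z.2.1 z.2.2}) := (G_isOpen j).preimage (by fun_prop)
  have h1 : IsOpen {x : AC | |x.1.1.im| < Real.pi} := isOpen_lt (by fun_prop) (by fun_prop)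
  have h2 : IsOpen {x : AC | |x.1.2.im| < Real.pi} := isOpen_lt (by fun_prop) (by fun_prop)
  exact h1.inter (h2.inter h)

lemma star_aux (g : ℝ → ℝ → ℝ → Prop) (u w : ℝ) (hu : |u| < Real.pi) (hw : |w| < Real.pi)
    (hc : g (u - w) 0 0)
    (h : ∀ a b φ P Q : ℝ, 0 ≤ a → 0 < b → a + b = 1 → -(2 * Real.pi) < φ → φ < 2 * Real.pi →
      g φ P Q → g (a * (u - w) + b * φ) (b * P) (b * Q)) : ContractibleSpace (Oset g) := by
  have hmem : (((⟨0, u⟩, ⟨0, w⟩), 0) : AC) ∈ Oset g := by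
    refine ⟨hu, hw, ?_⟩
    simpa using hc
  refine StarConvex.contractibleSpace (x := (((⟨0, u⟩, ⟨0, w⟩), 0) : AC)) ?_ ⟨_, hmem⟩
  rintro ⟨⟨L1, L3⟩, ζ⟩ ⟨h1, h3, hg⟩ a b ha hb hab
  rcases hb.eq_or_lt with hb | hb
  · subst hb
    have : a = 1 := by linarith
    subst this
    simpa using hmem
  · simp only at h1 h3 hg
    rw [abs_lt] at h1 h3
    have key := h a b _ _ _ ha hb hab (by linarith) (by linarith) hg
    have b1 : ∀ p q : ℝ, |p| < Real.pi → -Real.pi < q ∧ q < Real.pi → |a * p + b * q| < Real.pi := by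
      intro p q hp hq
      rw [abs_lt] at hp ⊢
      have ha' : a = 1 - b := by linarith
      constructor <;> subst ha' <;> nlinarith
    refine ⟨?_, ?_, ?_⟩
    · simpa using b1 _ _ hu h1
    · simpa using b1 _ _ hw h3
    · simp at key ⊢
      convert key using 1 <;> ring

lemma sin_anti {u v : ℝ} (h1 : Real.pi / 2 ≤ u) (h2 : u ≤ v) (h3 : v ≤ 3 * Real.pi / 2) :
    Real.sin v ≤ Real.sin u := by
  rw [← Real.sin_pi_sub u, ← Real.sin_pi_sub v]
  exact Real.sin_le_sin_of_le_of_le_pi_div_two (by linarith) (by linarith) (by linarith)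

lemma sin_mono2 {u v : ℝ} (h1 : 3 * Real.pi / 2 ≤ u) (h2 : u ≤ v) (h3 : v ≤ 2 * Real.pi) :
    Real.sin u ≤ Real.sin v := by
  rw [← Real.sin_sub_two_pi u, ← Real.sin_sub_two_pi v]
  have := Real.pi_pos
  exact Real.sin_le_sin_of_le_of_le_pi_div_two (by linarith) (by linarith) (by linarith)

lemma XY_mono {φ ψ P Q b : ℝ} (hb : 0 < b) (hs : Real.sin φ ≤ Real.sin ψ)
    (h : CX φ P < CY φ Q) : CX ψ (b * P) < CY ψ (b * Q) := by
  unfold CX CY at *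
  have : P ^ 2 * (1 - Real.sin ψ) < Q ^ 2 * (1 + Real.sin ψ) := by
    nlinarith [sq_nonneg P, sq_nonneg Q]
  have hb2 : 0 < b ^ 2 := by positivity
  nlinarith

lemma YX_mono {φ ψ P Q b : ℝ} (hb : 0 < b) (hs : Real.sin ψ ≤ Real.sin φ)
    (h : CY φ Q < CX φ P) : CY ψ (b * Q) < CX ψ (b * P) := by
  have := XY_mono (φ := -φ) (ψ := -ψ) (P := Q) (Q := P) hb (by simpa using hs)
    (by rw [CX_neg, CY_neg]; exact h)
  rwa [CX_neg, CY_neg] at this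

lemma O_G0 : ContractibleSpace (Oset G0) := by
  have hp := Real.pi_pos
  refine star_aux G0 0 0 (by simpa) (by simpa) ?_ ?_
  · simp only [G0, sub_zero]
    refine ⟨by linarith, by linarith, Or.inl (by linarith), Or.inl (by linarith)⟩
  · intro a b φ P Q ha hb hab h1 h2 ⟨h3, h4, h5, h6⟩
    have hb1 : b ≤ 1 := by linarith
    rw [show a * ((0 : ℝ) - 0) + b * φ = b * φ by ring]
    refine ⟨by nlinarith, by nlinarith, ?_, ?_⟩
    · by_cases hc : b * φ < Real.pi / 2
      · exact Or.inl hc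
      · right
        push Not at hc
        have h7 : b * φ ≤ φ := by nlinarith
        exact XY_mono hb (sin_anti hc h7 h4.le) (h5.resolve_left (by linarith))
    · by_cases hc : -(Real.pi / 2) < b * φ
      · exact Or.inl hc
      · right
        push Not at hc
        have h7 : φ ≤ b * φ := by nlinarith
        refine YX_mono hb ?_ (h6.resolve_left (by linarith))
        have := sin_anti (u := -(b * φ)) (v := -φ) (by linarith) (by linarith) (by linarith)
        simpa using this

lemma O_G1 : ContractibleSpace (Oset G1) := by
  have hp := Real.pi_pos
  refine star_aux G1 (7 * Real.pi / 8) (-(7 * Real.pi / 8)) (by rw [abs_lt]; constructor <;> linarith)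
    (by rw [abs_lt]; constructor <;> linarith) ?_ ?_
  · exact ⟨by linarith, Or.inl (by linarith)⟩
  · intro a b φ P Q ha hb hab h1 h2 ⟨h3, h4⟩
    have ha' : a = 1 - b := by linarith
    have hb1 : b ≤ 1 := by linarith
    subst ha'
    refine ⟨by nlinarith, ?_⟩
    by_cases hc : 3 * Real.pi / 2 < (1 - b) * (7 * Real.pi / 8 - -(7 * Real.pi / 8)) + b * φ
    · exact Or.inl hc
    · right
      push Not at hc
      have h7 : φ ≤ 3 * Real.pi / 2 := by
        by_contra h8
        push Not at h8
        nlinarith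
      refine YX_mono hb (sin_anti h3.le ?_ hc) (h4.resolve_left (by linarith))
      nlinarith

lemma O_G3 : ContractibleSpace (Oset G3) := by
  have hp := Real.pi_pos
  refine star_aux G3 (Real.pi / 2) (-(Real.pi / 2)) (by rw [abs_lt]; constructor <;> linarith)
    (by rw [abs_lt]; constructor <;> linarith) ?_ ?_
  · exact ⟨by linarith, Or.inl (by linarith), Or.inl (by linarith)⟩
  · intro a b φ P Q ha hb hab h1 h2 ⟨h3, h4, h5⟩
    have ha' : a = 1 - b := by linarith
    have hb1 : b ≤ 1 := by linarith
    subst ha'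
    rw [show (1 - b) * (Real.pi / 2 - -(Real.pi / 2)) + b * φ = Real.pi + b * (φ - Real.pi) by ring]
    refine ⟨by nlinarith, ?_, ?_⟩
    · by_cases hc : Real.pi / 2 < Real.pi + b * (φ - Real.pi)
      · exact Or.inl hc
      · right
        push Not at hc
        have h7 : φ ≤ Real.pi + b * (φ - Real.pi) := by nlinarith
        exact XY_mono hb (Real.sin_le_sin_of_le_of_le_pi_div_two h3.le hc h7)
          (h4.resolve_left (by linarith))
    · by_cases hc : Real.pi + b * (φ - Real.pi) < 3 * Real.pi / 2
      · exact Or.inl hc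
      · right
        push Not at hc
        have h7 : Real.pi + b * (φ - Real.pi) ≤ φ := by nlinarith
        exact YX_mono hb (sin_mono2 hc h7 h2.le) (h5.resolve_left (by linarith))

lemma O_reflect (g : ℝ → ℝ → ℝ → Prop) (h : ContractibleSpace (Oset g)) :
    ContractibleSpace (Oset fun φ P Q => g (-φ) Q P) := by
  refine contractible_of_retractOn _ (Oset g) h
    (fun x : AC => ((x.1.2, x.1.1), (starRingEnd ℂ) x.2))
    (fun x : AC => ((x.1.2, x.1.1), (starRingEnd ℂ) x.2)) ?_ ?_ ?_ ?_ ?_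
  · exact Continuous.continuousOn (by fun_prop)
  · exact Continuous.continuousOn (by fun_prop)
  · rintro x ⟨h1, h2, h3⟩
    refine ⟨h2, h1, ?_⟩
    convert h3 using 1 <;> simp <;> ring
  · rintro x ⟨h1, h2, h3⟩
    refine ⟨h2, h1, ?_⟩
    convert h3 using 1 <;> simp <;> ring
  · rintro x -
    simp

lemma wavg {m x y b : ℝ} (hb : 0 ≤ b) (ha : 0 ≤ 1 - b) (hx : m < x) (hy : m < y) :
    m < (1 - b) * x + b * y := by
  rcases hb.eq_or_lt with h | h
  · subst h; simpa
  · nlinarith [mul_pos h (sub_pos.mpr hy), mul_nonneg ha (sub_pos.mpr hx).le]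

lemma base_convex (m : ℝ) : Convex ℝ {x : ℂ × ℂ | |x.1.im| < Real.pi ∧ |x.2.im| < Real.pi ∧
    m < x.1.im - x.2.im} := by
  rintro x ⟨h1, h2, h3⟩ y ⟨k1, k2, k3⟩ a b ha hb hab
  have ha' : a = 1 - b := by linarith
  subst ha'
  rw [abs_lt] at h1 h2 k1 k2
  simp only [Set.mem_ofPred_eq, Prod.fst_add, Prod.smul_fst, Prod.snd_add, Prod.smul_snd,
    Complex.add_im, Complex.real_smul, Complex.mul_im, Complex.ofReal_re, Complex.ofReal_im,
    zero_mul, add_zero, abs_lt]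
  have e1 := wavg hb ha h1.1 k1.1
  have e2 := wavg hb ha (neg_lt_neg h1.2) (neg_lt_neg k1.2)
  have e3 := wavg hb ha h2.1 k2.1
  have e4 := wavg hb ha (neg_lt_neg h2.2) (neg_lt_neg k2.2)
  have e5 := wavg hb ha h3 k3
  refine ⟨⟨?_, ?_⟩, ⟨?_, ?_⟩, ?_⟩ <;> linarith

lemma half_convex (k l : ℝ) : Convex ℝ {z : ℂ | 0 < k * (z.re - z.im) + l * (z.re + z.im)} := by
  intro x h y h' a b ha hb hab
  simp only [Set.mem_ofPred_eq] at h h' ⊢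
  simp only [
    Complex.add_im, Complex.real_smul, Complex.mul_im, Complex.ofReal_re, Complex.ofReal_im,
    zero_mul, add_zero, Complex.add_re, Complex.mul_re, sub_zero]
  rcases hb.eq_or_lt with hb | hb
  · subst hb
    have : a = 1 := by linarith
    subst this
    simpa using h
  · have := mul_pos hb h'
    have := mul_nonneg ha h.le
    linarith

lemma O_G9 (e b : Bool) : ContractibleSpace (Oset (G9 e b)) := by
  have hp := Real.pi_pos
  refine contractible_of_convex_fibers _ (Oset_isOpen (.inr (.inr (e, b))))
    {x : ℂ × ℂ | |x.1.im| < Real.pi ∧ |x.2.im| < Real.pi ∧ -(2 * Real.pi) < x.1.im - x.2.im} ?_ ?_ ?_ ?_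
  · exact (base_convex _).contractibleSpace ⟨0, by simp [hp]⟩
  · rintro x ⟨h1, h2, h3⟩
    refine ⟨h1, h2, ?_⟩
    rw [abs_lt] at h1 h2
    linarith
  · rintro x ⟨h1, h2, h3⟩
    refine ⟨⟨sg b * (|kp (x.1.im - x.2.im)| - sg e * |lm (x.1.im - x.2.im)|) / 2,
      sg b * (- sg e * |lm (x.1.im - x.2.im)| - |kp (x.1.im - x.2.im)|) / 2⟩, h1, h2, ?_⟩
    simp only [G, G9]
    have h4 : 0 < |kp (x.1.im - x.2.im)| ^ 2 + |lm (x.1.im - x.2.im)| ^ 2 := by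
      rcases not_both (x.1.im - x.2.im) with h | h
      · have := abs_pos.mpr h; positivity
      · have := abs_pos.mpr h; positivity
    convert h4 using 1
    rcases sg_cases b with ⟨-, hb⟩ | ⟨-, hb⟩ <;> rcases sg_cases e with ⟨-, he⟩ | ⟨-, he⟩ <;>
      rw [hb, he] <;> ring
  · rintro x ⟨h1, h2, h3⟩
    refine Eq.mpr (congrArg (Convex ℝ) ?_)
      (half_convex (sg b * |kp (x.1.im - x.2.im)|) (- sg b * sg e * |lm (x.1.im - x.2.im)|))
    ext z
    simp only [Oset, G, G9, Set.mem_ofPred_eq, h1, h2, true_and]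
    rw [show ∀ s k e l p q : ℝ, s * (q * k - e * (p * l)) = s * k * q + -s * e * l * p by
      intros; ring]

lemma O_G5 (b : Bool) : ContractibleSpace (Oset (G5 b)) := by
  have hp := Real.pi_pos
  have hk : ∀ x : ℂ × ℂ, |x.1.im| < Real.pi → |x.2.im| < Real.pi →
      3 * Real.pi / 2 < x.1.im - x.2.im → 0 < |kp (x.1.im - x.2.im)| := by
    intro x h1 h2 h3
    rw [abs_lt] at h1 h2
    have := (cos_regions (φ := x.1.im - x.2.im) (by linarith) (by linarith)).2.1 h3
    rw [cos_eq_kl] at this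
    rw [abs_pos]
    intro h
    rw [h] at this
    simp at this
  have hiff : ∀ φ P Q : ℝ, 0 < |kp φ| → ((CX φ P < CY φ Q ∧ 0 < sg b * Q) ↔
      (0 < (sg b * |kp φ|) * Q + |lm φ| * P ∧ 0 < (sg b * |kp φ|) * Q + (-|lm φ|) * P)) := by
    intro φ P Q hk
    unfold CX CY
    rw [← kp_sq, ← lm_sq, ← sq_abs (kp φ), ← sq_abs (lm φ)]
    have hl := abs_nonneg (lm φ)
    generalize |kp φ| = k at *
    generalize |lm φ| = l at *
    have e1 : ∀ Q : ℝ, (P ^ 2 * l ^ 2 < Q ^ 2 * k ^ 2 ∧ 0 < Q) ↔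
        (0 < k * Q + l * P ∧ 0 < k * Q + (-l) * P) := by
      intro Q
      constructor
      · rintro ⟨h1, h2⟩
        have h3 : 0 < k * Q := by positivity
        have h4 : (l * P) ^ 2 < (k * Q) ^ 2 := by nlinarith
        have := abs_lt_of_sq_lt_sq' h4 h3.le
        constructor <;> linarith [this.1, this.2]
      · rintro ⟨h1, h2⟩
        have h3 : 0 < k * Q := by linarith
        have h4 := mul_pos h1 h2
        refine ⟨by nlinarith, ?_⟩
        by_contra h5
        nlinarith
    rcases sg_cases b with ⟨-, hb⟩ | ⟨-, hb⟩ <;> rw [hb]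
    · simpa using e1 Q
    · simpa using e1 (-Q)
  refine contractible_of_convex_fibers _ (Oset_isOpen (.inr (.inl (.inr (true, b)))))
    {x : ℂ × ℂ | |x.1.im| < Real.pi ∧ |x.2.im| < Real.pi ∧ 3 * Real.pi / 2 < x.1.im - x.2.im} ?_ ?_ ?_ ?_
  · refine (base_convex _).contractibleSpace
      ⟨(⟨0, 7 * Real.pi / 8⟩, ⟨0, -(7 * Real.pi / 8)⟩), ?_, ?_, ?_⟩
    · simp only [abs_lt]; constructor <;> linarith
    · simp only [abs_lt]; constructor <;> linarith
    · simp only; linarith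
  · rintro x ⟨h1, h2, h3⟩
    exact ⟨h1, h2, h3.1⟩
  · rintro x ⟨h1, h2, h3⟩
    refine ⟨⟨sg b / 2, -(sg b / 2)⟩, h1, h2, h3, ?_⟩
    have h0 := hk x h1 h2 h3
    rw [hiff _ _ _ h0]
    have h4 : 0 < |kp (x.1.im - x.2.im)| := h0
    rcases sg_cases b with ⟨-, hb⟩ | ⟨-, hb⟩ <;> simp [hb] at h4 ⊢ <;> exact h4
  · rintro x ⟨h1, h2, h3⟩
    refine Eq.mpr (congrArg (Convex ℝ) ?_)
      ((half_convex (sg b * |kp (x.1.im - x.2.im)|) (|lm (x.1.im - x.2.im)|)).inter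
      (half_convex (sg b * |kp (x.1.im - x.2.im)|) (-|lm (x.1.im - x.2.im)|)))
    ext z
    simp only [Oset, G, G5, Set.mem_ofPred_eq, h1, h2, h3, true_and]
    rw [hiff _ _ _ (hk x h1 h2 h3)]
    rfl

lemma O_contractible (j : J) : ContractibleSpace (Oset (G j)) := by
  rcases j with (_ | _ | _) | ((_ | _) | ⟨_ | _, b⟩) | ⟨e, b⟩
  · exact O_G0
  · exact O_reflect _ O_G1
  · exact O_G1
  · exact O_reflect _ O_G3
  · exact O_G3
  · exact O_reflect _ (O_G5 b)
  · exact O_G5 b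
  · exact O_G9 e b

noncomputable def tau (σ₁ σ₃ : ℝ) (x : AC) : AC :=
  ((Complex.log (σ₁ * x.1.1), Complex.log (Complex.I * σ₃ * x.1.2)),
    x.2 * Complex.exp (-(Complex.I * (((Complex.log (σ₁ * x.1.1)).im +
      (Complex.log (Complex.I * σ₃ * x.1.2)).im : ℝ) / 2))))

noncomputable def extau (σ₁ σ₃ : ℝ) (y : AC) : AC :=
  ((σ₁ * Complex.exp y.1.1, -Complex.I * σ₃ * Complex.exp y.1.2),
    y.2 * Complex.exp (Complex.I * ((y.1.1.im + y.1.2.im : ℝ) / 2)))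

def Wset (σ₁ σ₃ : ℝ) (j : J) : Set AC :=
  {x | ((σ₁ : ℂ) * x.1.1 ∈ Complex.slitPlane ∧ Complex.I * σ₃ * x.1.2 ∈ Complex.slitPlane) ∧
    tau σ₁ σ₃ x ∈ Oset (G j)}

lemma tau_continuousOn (σ₁ σ₃ : ℝ) : ContinuousOn (tau σ₁ σ₃)
    {x | (σ₁ : ℂ) * x.1.1 ∈ Complex.slitPlane ∧ Complex.I * σ₃ * x.1.2 ∈ Complex.slitPlane} := by
  have h1 : ContinuousOn (fun x : AC => Complex.log (σ₁ * x.1.1))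
      {x | (σ₁ : ℂ) * x.1.1 ∈ Complex.slitPlane ∧ Complex.I * σ₃ * x.1.2 ∈ Complex.slitPlane} :=
    ContinuousOn.clog (by fun_prop) (fun x hx => hx.1)
  have h2 : ContinuousOn (fun x : AC => Complex.log (Complex.I * σ₃ * x.1.2))
      {x | (σ₁ : ℂ) * x.1.1 ∈ Complex.slitPlane ∧ Complex.I * σ₃ * x.1.2 ∈ Complex.slitPlane} :=
    ContinuousOn.clog (by fun_prop) (fun x hx => hx.2)
  unfold tau
  refine (h1.prodMk h2).prodMk (ContinuousOn.mul (by fun_prop) ?_)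
  have h3 := Complex.continuous_im.comp_continuousOn h1
  have h4 := Complex.continuous_im.comp_continuousOn h2
  have h5 := Complex.continuous_ofReal.comp_continuousOn (h3.add h4)
  refine Complex.continuous_exp.comp_continuousOn ?_
  exact (continuousOn_const.mul (h5.div_const 2)).neg

lemma slit_isOpen (σ₁ σ₃ : ℝ) : IsOpen {x : AC | (σ₁ : ℂ) * x.1.1 ∈ Complex.slitPlane ∧
    Complex.I * σ₃ * x.1.2 ∈ Complex.slitPlane} :=
  (Complex.isOpen_slitPlane.preimage (by fun_prop : Continuous fun x : AC => (σ₁ : ℂ) * x.1.1)).inter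
  (Complex.isOpen_slitPlane.preimage
    (by fun_prop : Continuous fun x : AC => Complex.I * σ₃ * x.1.2))

lemma Wset_isOpen (σ₁ σ₃ : ℝ) (j : J) : IsOpen (Wset σ₁ σ₃ j) :=
  (tau_continuousOn σ₁ σ₃).isOpen_inter_preimage (slit_isOpen σ₁ σ₃) (Oset_isOpen j)

lemma exp_slit {L : ℂ} (h : |L.im| < Real.pi) : Complex.exp L ∈ Complex.slitPlane := by
  rw [abs_lt] at h
  rw [Complex.mem_slitPlane_iff_arg]
  refine ⟨?_, Complex.exp_ne_zero _⟩
  rw [← Complex.log_im, Complex.log_exp h.1 h.2.le]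
  exact h.2.ne

lemma sq_cplx {σ : ℝ} (h : σ ^ 2 = 1) : (σ : ℂ) ^ 2 = 1 := by exact_mod_cast h

lemma tau_extau {σ₁ σ₃ : ℝ} (h1 : σ₁ ^ 2 = 1) (h3 : σ₃ ^ 2 = 1) (y : AC)
    (hy1 : |y.1.1.im| < Real.pi) (hy3 : |y.1.2.im| < Real.pi) :
    (σ₁ : ℂ) * (extau σ₁ σ₃ y).1.1 = Complex.exp y.1.1 ∧
    Complex.I * σ₃ * (extau σ₁ σ₃ y).1.2 = Complex.exp y.1.2 ∧
    tau σ₁ σ₃ (extau σ₁ σ₃ y) = y := by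
  have e1 : (σ₁ : ℂ) * (extau σ₁ σ₃ y).1.1 = Complex.exp y.1.1 := by
    simp only [extau]; linear_combination Complex.exp y.1.1 * sq_cplx h1
  have e3 : Complex.I * σ₃ * (extau σ₁ σ₃ y).1.2 = Complex.exp y.1.2 := by
    simp only [extau]
    linear_combination Complex.exp y.1.2 * sq_cplx h3 -
      σ₃ ^ 2 * Complex.exp y.1.2 * Complex.I_sq
  refine ⟨e1, e3, ?_⟩
  rw [abs_lt] at hy1 hy3
  unfold tau
  rw [e1, e3, Complex.log_exp hy1.1 hy1.2.le, Complex.log_exp hy3.1 hy3.2.le]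
  simp only [extau]
  rw [mul_assoc, ← Complex.exp_add, add_neg_cancel, Complex.exp_zero, mul_one]

lemma extau_tau {σ₁ σ₃ : ℝ} (h1 : σ₁ ^ 2 = 1) (h3 : σ₃ ^ 2 = 1) (x : AC)
    (hx1 : (σ₁ : ℂ) * x.1.1 ∈ Complex.slitPlane)
    (hx3 : Complex.I * σ₃ * x.1.2 ∈ Complex.slitPlane) :
    extau σ₁ σ₃ (tau σ₁ σ₃ x) = x := by
  obtain ⟨⟨C1, C3⟩, C2⟩ := x
  simp only [extau, tau] at *
  rw [Complex.exp_log (Complex.slitPlane_ne_zero hx1), Complex.exp_log (Complex.slitPlane_ne_zero hx3)]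
  rw [mul_assoc C2, ← Complex.exp_add, neg_add_cancel, Complex.exp_zero, mul_one]
  congr 2
  · linear_combination C1 * sq_cplx h1
  · linear_combination C3 * sq_cplx h3 - σ₃ ^ 2 * C3 * Complex.I_sq

lemma Wset_contractible {σ₁ σ₃ : ℝ} (h1 : σ₁ ^ 2 = 1) (h3 : σ₃ ^ 2 = 1) (j : J) :
    ContractibleSpace (Wset σ₁ σ₃ j) := by
  refine contractible_of_retractOn _ _ (O_contractible j) (tau σ₁ σ₃) (extau σ₁ σ₃) ?_ ?_ ?_ ?_ ?_
  · exact (tau_continuousOn σ₁ σ₃).mono fun x hx => hx.1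
  · refine Continuous.continuousOn ?_
    unfold extau
    fun_prop
  · exact fun x hx => hx.2
  · rintro y hy
    obtain ⟨a1, a2, a3⟩ := tau_extau h1 h3 y hy.1 hy.2.1
    refine ⟨⟨?_, ?_⟩, ?_⟩
    · rw [a1]; exact exp_slit hy.1
    · rw [a2]; exact exp_slit hy.2.1
    · rw [a3]; exact hy
  · exact fun x hx => extau_tau h1 h3 x hx.1.1 hx.1.2

def br31 (x : AC) : ℝ := x.1.2.re * x.1.1.im - x.1.2.im * x.1.1.re
def br32 (x : AC) : ℝ := x.1.2.re * x.2.im - x.1.2.im * x.2.re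
def br21 (x : AC) : ℝ := x.2.re * x.1.1.im - x.2.im * x.1.1.re

lemma br_extau (σ₁ σ₃ : ℝ) (y : AC) :
    br31 (extau σ₁ σ₃ y) = σ₁ * σ₃ * (Real.exp y.1.1.re * Real.exp y.1.2.re) *
      Real.cos (y.1.1.im - y.1.2.im) ∧
    br32 (extau σ₁ σ₃ y) = σ₃ * Real.exp y.1.2.re / 2 *
      ((y.2.re + y.2.im) * lm (y.1.1.im - y.1.2.im) + (y.2.re - y.2.im) * kp (y.1.1.im - y.1.2.im)) ∧
    br21 (extau σ₁ σ₃ y) = σ₁ * Real.exp y.1.1.re / 2 *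
      ((y.2.re - y.2.im) * kp (y.1.1.im - y.1.2.im) - (y.2.re + y.2.im) * lm (y.1.1.im - y.1.2.im)) := by
  obtain ⟨⟨⟨r1, t1⟩, ⟨r3, t3⟩⟩, ⟨p, q⟩⟩ := y
  have hE : Complex.exp (Complex.I * ((t1 + t3 : ℝ) / 2)) =
      ⟨Real.cos ((t1 + t3) / 2), Real.sin ((t1 + t3) / 2)⟩ := by
    apply Complex.ext <;> simp [Complex.exp_re, Complex.exp_im]
  have c1 : Real.cos ((t1 - t3) / 2) = Real.cos ((t1 + t3) / 2) * Real.cos t3 +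
      Real.sin ((t1 + t3) / 2) * Real.sin t3 := by
    rw [← Real.cos_sub]; congr 1; ring
  have c2 : Real.sin ((t1 - t3) / 2) = Real.sin ((t1 + t3) / 2) * Real.cos t3 -
      Real.cos ((t1 + t3) / 2) * Real.sin t3 := by
    rw [← Real.sin_sub]; congr 1; ring
  have c3 : Real.cos ((t1 - t3) / 2) = Real.cos t1 * Real.cos ((t1 + t3) / 2) +
      Real.sin t1 * Real.sin ((t1 + t3) / 2) := by
    rw [← Real.cos_sub]; congr 1; ring
  have c4 : Real.sin ((t1 - t3) / 2) = Real.sin t1 * Real.cos ((t1 + t3) / 2) -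
      Real.cos t1 * Real.sin ((t1 + t3) / 2) := by
    rw [← Real.sin_sub]; congr 1; ring
  simp only [extau, br31, br32, br21, hE, kp, lm]
  simp only [Complex.exp_re, Complex.exp_im, Complex.mul_re, Complex.mul_im, Complex.neg_re,
    Complex.neg_im, Complex.I_re, Complex.I_im, Complex.ofReal_re, Complex.ofReal_im]
  refine ⟨?_, ?_, ?_⟩
  · rw [Real.cos_sub]; ring
  · rw [c1, c2]; ring
  · rw [c3, c4]; ring

lemma R_iff_br {σ₁ σ₃ : ℝ} {e k : Bool} {s₁ s₂ s₃ s₄ : ℝ} (h1 : s₁ ^ 2 = 1) (h3 : s₃ ^ 2 = 1)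
    (hs2 : s₂ = s₁ * sg e) (hs4 : s₄ = s₃ * sg k) (hσ₁ : σ₁ = s₁) (hσ₃ : σ₃ = s₂ * s₃) (y : AC) :
    R e k (y.1.1.im - y.1.2.im) (y.2.re + y.2.im) (y.2.re - y.2.im) ↔
    (0 < s₃ * br31 (extau σ₁ σ₃ y) ∨ br32 (extau σ₁ σ₃ y) ≠ 0) ∧
    (0 < s₄ * br31 (extau σ₁ σ₃ y) ∨ br21 (extau σ₁ σ₃ y) ≠ 0) := by
  obtain ⟨b1, b2, b3⟩ := br_extau σ₁ σ₃ y
  rw [b1, b2, b3]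
  have E1 := Real.exp_pos y.1.1.re
  have E3 := Real.exp_pos y.1.2.re
  have E := mul_pos E1 E3
  have hse : sg e ^ 2 = 1 := by cases e <;> simp [sg]
  have q1 : s₁ ≠ 0 := by rintro rfl; simp at h1
  have q3 : s₃ ≠ 0 := by rintro rfl; simp at h3
  have qe : sg e ≠ 0 := by intro h; rw [h] at hse; simp at hse
  have hσ1 : σ₁ ≠ 0 := by rw [hσ₁]; exact q1
  have hσ3 : σ₃ ≠ 0 := by rw [hσ₃, hs2]; positivity
  unfold R
  generalize Real.cos (y.1.1.im - y.1.2.im) = C at *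
  have k1 : s₃ * (σ₁ * σ₃ * (Real.exp y.1.1.re * Real.exp y.1.2.re) * C) =
      (Real.exp y.1.1.re * Real.exp y.1.2.re) * (sg e * C) := by
    rw [hσ₁, hσ₃, hs2]
    linear_combination (Real.exp y.1.1.re * Real.exp y.1.2.re) * (sg e * C) * (s₃ ^ 2 * h1 + h3)
  have k2 : s₄ * (σ₁ * σ₃ * (Real.exp y.1.1.re * Real.exp y.1.2.re) * C) =
      (Real.exp y.1.1.re * Real.exp y.1.2.re) * (sg e * sg k * C) := by
    rw [hs4, hσ₁, hσ₃, hs2]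
    linear_combination (Real.exp y.1.1.re * Real.exp y.1.2.re) * (sg e * sg k * C) *
      (s₃ ^ 2 * h1 + h3)
  rw [k1, k2, mul_pos_iff_of_pos_left E, mul_pos_iff_of_pos_left E]
  have n1 : σ₃ * Real.exp y.1.2.re / 2 ≠ 0 := by positivity
  have n2 : σ₁ * Real.exp y.1.1.re / 2 ≠ 0 := by positivity
  rw [mul_ne_zero_iff, mul_ne_zero_iff]
  simp only [ne_eq, n1, n2, not_false_eq_true, true_and]

abbrev VC := AC × (ℝ × ℝ × ℝ × ℝ)

noncomputable def ff1 (z : VC) : ℝ := z.1.1.1.re - z.2.2.2.1 * z.1.1.1.im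
noncomputable def ff2 (z : VC) : ℝ := z.1.1.1.re + z.1.2.re * z.2.1 + z.2.2.2.2 * z.1.1.2.re
noncomputable def ff3 (z : VC) : ℝ := br31 z.1 + z.2.1 * br32 z.1
noncomputable def ff4 (z : VC) : ℝ := br31 z.1 + z.2.2.1 * br21 z.1

lemma ff1_cont : Continuous ff1 := by unfold ff1; fun_prop
lemma ff2_cont : Continuous ff2 := by unfold ff2; fun_prop
lemma ff3_cont : Continuous ff3 := by unfold ff3 br31 br32; fun_prop
lemma ff4_cont : Continuous ff4 := by unfold ff4 br31 br21; fun_prop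

lemma slit1 {s : ℝ} (hs : s ^ 2 = 1) (z : ℂ) :
    (s : ℂ) * z ∈ Complex.slitPlane ↔ 0 < s * z.re ∨ z.im ≠ 0 := by
  have q : s ≠ 0 := by rintro rfl; simp at hs
  rw [Complex.mem_slitPlane_iff]
  simp [q]

lemma slit3 {s : ℝ} (hs : s ^ 2 = 1) (z : ℂ) :
    Complex.I * (s : ℂ) * z ∈ Complex.slitPlane ↔ 0 < -(s * z.im) ∨ z.re ≠ 0 := by
  have q : s ≠ 0 := by rintro rfl; simp at hs
  rw [Complex.mem_slitPlane_iff]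
  simp [q]

lemma fibre_iff {s₁ s₂ s₃ s₄ : ℝ} (h1 : s₁ ^ 2 = 1) (h2 : s₂ ^ 2 = 1) (h3 : s₃ ^ 2 = 1)
    (h4 : s₄ ^ 2 = 1) (x : AC) :
    (∃ t, 0 < s₁ * ff1 (x, t) ∧ 0 < s₂ * ff2 (x, t) ∧ 0 < s₃ * ff3 (x, t) ∧ 0 < s₄ * ff4 (x, t)) ↔
    ((0 < s₁ * x.1.1.re ∨ x.1.1.im ≠ 0) ∧ (0 < -(s₂ * s₃ * x.1.2.im) ∨ x.1.2.re ≠ 0)) ∧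
    (0 < s₃ * br31 x ∨ br32 x ≠ 0) ∧ (0 < s₄ * br31 x ∨ br21 x ≠ 0) := by
  obtain ⟨⟨⟨α, X⟩, ⟨y, e⟩⟩, ⟨a, d⟩⟩ := x
  have aux : ∀ (s A B : ℝ), s ^ 2 = 1 → (0 < s * A ∨ B ≠ 0) → ∃ t, 0 < s * (A + t * B) := by
    intro s A B hs h
    by_cases hB : B = 0
    · exact ⟨0, by simpa [hB] using h⟩
    · refine ⟨(s - A) / B, ?_⟩
      rw [div_mul_cancel₀ _ hB]
      nlinarith
  constructor
  · rintro ⟨⟨b, c, v, w⟩, k1, k2, k3, k4⟩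
    simp only [ff1, ff2, ff3, ff4, br31, br32, br21] at *
    refine ⟨⟨?_, ?_⟩, ?_, ?_⟩
    · by_cases hX : X = 0
      · left; simpa [hX] using k1
      · exact Or.inr hX
    · by_cases hy : y = 0
      · left
        subst hy
        have := mul_pos k2 k3
        have h5 : s₂ * (α + a * b + w * 0) * (s₃ * (0 * X - e * α + b * (0 * d - e * a))) =
            -(s₂ * s₃ * e) * (α + a * b) ^ 2 := by ring
        rw [h5] at this
        exact (pos_iff_pos_of_mul_pos this).mpr (by
          have : (α + a * b) ≠ 0 := by
            intro h; rw [h] at this; simp at this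
          positivity)
      · exact Or.inr hy
    · by_cases hX : y * d - e * a = 0
      · left; simpa [hX] using k3
      · exact Or.inr hX
    · by_cases hX : a * X - d * α = 0
      · left; simpa [hX] using k4
      · exact Or.inr hX
  · rintro ⟨⟨k1, k2⟩, k3, k4⟩
    simp only [ff1, ff2, ff3, ff4, br31, br32, br21] at *
    obtain ⟨v, hv⟩ := aux s₁ α X h1 k1
    obtain ⟨b, hb⟩ := aux _ _ _ h3 k3
    obtain ⟨c, hc⟩ := aux _ _ _ h4 k4
    have : ∃ w, 0 < s₂ * (α + a * b + w * y) := by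
      apply aux _ _ _ h2
      by_cases hy : y = 0
      · left
        subst hy
        have k5 := k2.resolve_right (by simp)
        have h5 : s₃ * (0 * X - e * α + b * (0 * d - e * a)) =
            (-(s₂ * s₃ * e)) * (s₂ * (α + a * b)) := by
          linear_combination (s₃ * e * (α + a * b)) * h2
        rw [h5] at hb
        exact (pos_iff_pos_of_mul_pos hb).mp k5
      · exact Or.inr hy
    obtain ⟨w, hw⟩ := this
    exact ⟨(b, c, -v, w), by linarith, hw, hb, hc⟩

lemma sg_sq (b : Bool) : sg b ^ 2 = 1 := by cases b <;> simp [sg]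

lemma sg_inj {b c : Bool} {f : ℝ} (h : 0 < sg b * f) (h' : 0 < sg c * f) : b = c := by
  cases b <;> cases c <;> simp [sg] at * <;> linarith

lemma ex_sg {f : ℝ} (h : f ≠ 0) : ∃ b, 0 < sg b * f := by
  rcases lt_or_gt_of_ne h with h | h
  · exact ⟨false, by simp [sg, h]⟩
  · exact ⟨true, by simpa [sg] using h⟩

lemma ex_sg2 (s : Bool) {f : ℝ} (h : f ≠ 0) : ∃ b, 0 < sg s * sg b * f := by
  obtain ⟨b, hb⟩ := ex_sg (f := sg s * f) (mul_ne_zero (by cases s <;> simp [sg]) h)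
  exact ⟨b, by linarith⟩

def Bset (i : Bool × Bool × J) : Set VC :=
  {z | (0 < sg i.1 * ff1 z ∧ 0 < sg i.1 * sg (eps i.2.2) * ff2 z ∧ 0 < sg i.2.1 * ff3 z ∧
    0 < sg i.2.1 * sg (kap i.2.2) * ff4 z) ∧
    z.1 ∈ Wset (sg i.1) (sg i.1 * sg (eps i.2.2) * sg i.2.1) i.2.2}

lemma Bset_isOpen (i : Bool × Bool × J) : IsOpen (Bset i) := by
  refine IsOpen.inter (IsOpen.inter ?_ (IsOpen.inter ?_ (IsOpen.inter ?_ ?_)))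
    ((Wset_isOpen _ _ i.2.2).preimage continuous_fst)
  · exact isOpen_lt continuous_const (continuous_const.mul ff1_cont)
  · exact isOpen_lt continuous_const (continuous_const.mul ff2_cont)
  · exact isOpen_lt continuous_const (continuous_const.mul ff3_cont)
  · exact isOpen_lt continuous_const (continuous_const.mul ff4_cont)

lemma Bset_disj (i i' : Bool × Bool × J) (z : VC) (h : z ∈ Bset i) (h' : z ∈ Bset i') : i = i' := by
  obtain ⟨k1, k3, j⟩ := i
  obtain ⟨k1', k3', j'⟩ := i'
  obtain ⟨⟨a1, a2, a3, a4⟩, b1, b2⟩ := h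
  obtain ⟨⟨a1', a2', a3', a4'⟩, b1', b2'⟩ := h'
  dsimp only at *
  obtain rfl := sg_inj a1 a1'
  obtain rfl := sg_inj a3 a3'
  have he : eps j = eps j' := sg_inj (f := sg k1 * ff2 z) (by linarith) (by linarith)
  have hk : kap j = kap j' := sg_inj (f := sg k3 * ff4 z) (by linarith) (by linarith)
  rw [← he] at b2'
  rw [G_disj b2.2.2 b2'.2.2 he hk]

lemma Bset_cover (z : VC) (h1 : ff1 z ≠ 0) (h2 : ff2 z ≠ 0) (h3 : ff3 z ≠ 0) (h4 : ff4 z ≠ 0) :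
    ∃ i, z ∈ Bset i := by
  obtain ⟨k1, a1⟩ := ex_sg h1
  obtain ⟨k3, a3⟩ := ex_sg h3
  obtain ⟨e, a2⟩ := ex_sg2 k1 h2
  obtain ⟨k, a4⟩ := ex_sg2 k3 h4
  have q1 := sg_sq k1
  have q3 := sg_sq k3
  have q2 : (sg k1 * sg e) ^ 2 = 1 := by rw [mul_pow, q1, sg_sq, one_mul]
  have q4 : (sg k3 * sg k) ^ 2 = 1 := by rw [mul_pow, q3, sg_sq, one_mul]
  have q23 : (sg k1 * sg e * sg k3) ^ 2 = 1 := by rw [mul_pow, q2, q3, one_mul]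
  have hf := (fibre_iff q1 q2 q3 q4 z.1).mp ⟨z.2, a1, a2, a3, a4⟩
  obtain ⟨⟨c1, c2⟩, c3⟩ := hf
  rw [← slit1 q1] at c1
  rw [← slit3 q23] at c2
  have hx := extau_tau q1 q23 z.1 c1 c2
  rw [← hx, ← R_iff_br q1 q3 rfl rfl rfl rfl] at c3
  have t1 : |(tau (sg k1) (sg k1 * sg e * sg k3) z.1).1.1.im| < Real.pi := by
    simp only [tau, Complex.log_im]
    exact abs_lt.mpr ⟨Complex.neg_pi_lt_arg _, lt_of_le_of_ne (Complex.arg_le_pi _)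
      (Complex.mem_slitPlane_iff_arg.mp c1).1⟩
  have t3 : |(tau (sg k1) (sg k1 * sg e * sg k3) z.1).1.2.im| < Real.pi := by
    simp only [tau, Complex.log_im]
    exact abs_lt.mpr ⟨Complex.neg_pi_lt_arg _, lt_of_le_of_ne (Complex.arg_le_pi _)
      (Complex.mem_slitPlane_iff_arg.mp c2).1⟩
  have t1' := abs_lt.mp t1
  have t3' := abs_lt.mp t3
  obtain ⟨j, rfl, rfl, hG⟩ := G_cover (by linarith) (by linarith) c3
  exact ⟨(k1, k3, j), ⟨a1, a2, a3, a4⟩, ⟨c1, c2⟩, t1, t3, hG⟩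

lemma aff_convex {T : Type*} [AddCommGroup T] [Module ℝ T] (s A B : ℝ) (l : T →ₗ[ℝ] ℝ) :
    Convex ℝ {t : T | 0 < s * (A + B * l t)} := by
  intro x h y h' a b ha hb hab
  simp only [Set.mem_ofPred_eq, map_add, map_smul, smul_eq_mul] at h h' ⊢
  have ha' : a = 1 - b := by linarith
  subst ha'
  have := wavg hb ha h h'
  linarith

lemma Bset_contractible (i : Bool × Bool × J) : ContractibleSpace (Bset i) := by
  obtain ⟨k1, k3, j⟩ := i
  have q1 := sg_sq k1
  have q3 := sg_sq k3
  have q2 : (sg k1 * sg (eps j)) ^ 2 = 1 := by rw [mul_pow, q1, sg_sq, one_mul]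
  have q4 : (sg k3 * sg (kap j)) ^ 2 = 1 := by rw [mul_pow, q3, sg_sq, one_mul]
  have q23 : (sg k1 * sg (eps j) * sg k3) ^ 2 = 1 := by rw [mul_pow, q2, q3, one_mul]
  refine contractible_of_convex_fibers _ (Bset_isOpen (k1, k3, j)) _
    (Wset_contractible q1 q23 j) (fun x hx => hx.2) ?_ ?_
  · intro x hx
    have c3 : R (eps j) (kap j) _ _ _ := G_R (j := j) (φ := (tau (sg k1) (sg k1 * sg (eps j) * sg k3) x).1.1.im -
      (tau (sg k1) (sg k1 * sg (eps j) * sg k3) x).1.2.im)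
      (by have h1 := abs_lt.mp hx.2.1; have h2 := abs_lt.mp hx.2.2.1; linarith)
      (by have h1 := abs_lt.mp hx.2.1; have h2 := abs_lt.mp hx.2.2.1; linarith) hx.2.2.2
    rw [R_iff_br q1 q3 rfl rfl rfl rfl, extau_tau q1 q23 x hx.1.1 hx.1.2] at c3
    obtain ⟨t, ht⟩ := (fibre_iff q1 q2 q3 q4 x).mpr
      ⟨⟨(slit1 q1 _).mp hx.1.1, (slit3 q23 _).mp hx.1.2⟩, c3⟩
    exact ⟨t, ht, hx⟩
  · intro x hx
    have e : {t | (x, t) ∈ Bset (k1, k3, j)} =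
        {t | 0 < sg k1 * ff1 (x, t)} ∩ ({t | 0 < sg k1 * sg (eps j) * ff2 (x, t)} ∩
        ({t | 0 < sg k3 * ff3 (x, t)} ∩ {t | 0 < sg k3 * sg (kap j) * ff4 (x, t)})) := by
      ext t
      exact ⟨fun h => h.1, fun h => ⟨h, hx⟩⟩
    rw [e]
    refine Convex.inter ?_ (Convex.inter ?_ (Convex.inter ?_ ?_))
    · convert aff_convex (T := ℝ × ℝ × ℝ × ℝ) (sg k1) x.1.1.re (-x.1.1.im)
        ((LinearMap.fst ℝ ℝ ℝ).comp ((LinearMap.snd ℝ ℝ (ℝ × ℝ)).comp (LinearMap.snd ℝ ℝ (ℝ × ℝ × ℝ)))) using 6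
      simp [ff1]; ring
    · convert aff_convex (T := ℝ × ℝ × ℝ × ℝ) (sg k1 * sg (eps j)) x.1.1.re 1
        (x.2.re • (LinearMap.fst ℝ ℝ (ℝ × ℝ × ℝ)) + x.1.2.re •
        ((LinearMap.snd ℝ ℝ ℝ).comp ((LinearMap.snd ℝ ℝ (ℝ × ℝ)).comp (LinearMap.snd ℝ ℝ (ℝ × ℝ × ℝ))))) using 6
      simp [ff2]; ring
    · convert aff_convex (T := ℝ × ℝ × ℝ × ℝ) (sg k3) (br31 x) (br32 x)
        (LinearMap.fst ℝ ℝ (ℝ × ℝ × ℝ)) using 6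
      simp [ff3]; ring
    · convert aff_convex (T := ℝ × ℝ × ℝ × ℝ) (sg k3 * sg (kap j)) (br31 x) (br21 x)
        ((LinearMap.fst ℝ ℝ (ℝ × ℝ)).comp (LinearMap.snd ℝ ℝ (ℝ × ℝ × ℝ))) using 6
      simp [ff4]; ring

/-- The matrix with given coordinates. -/
def toMat (z : VC) : Matrix (Fin 5) (Fin 5) ℝ :=
  Dmat z.1.1.1.re z.1.1.1.im z.1.2.re z.1.2.im z.1.1.2.re z.1.1.2.im z.2.1 z.2.2.1 z.2.2.2.1 z.2.2.2.2

/-- The coordinates of a matrix. -/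
def toCoord (L : Matrix (Fin 5) (Fin 5) ℝ) : VC :=
  (((⟨-(L 4 0 + (-L 4 2 + L 4 3 * L 3 2) * L 2 0 + -L 4 3 * L 3 0),
      -(L 4 1 + (-L 4 2 + L 4 3 * L 3 2) * L 2 1 + -L 4 3 * L 3 1)⟩,
    ⟨L 3 0, L 3 1⟩), ⟨L 2 0, L 2 1⟩), (-L 4 2 + L 4 3 * L 3 2, -L 3 2, L 1 0, -L 4 3))

lemma toCoord_cont : Continuous toCoord := by
  have h : ∀ f g : Matrix (Fin 5) (Fin 5) ℝ → ℝ, Continuous f → Continuous g →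
      Continuous fun L => (⟨f L, g L⟩ : ℂ) := by
    intro f g hf hg
    have := (Complex.continuous_ofReal.comp hf).add
      ((Complex.continuous_ofReal.comp hg).mul (continuous_const (y := Complex.I)))
    refine this.congr fun L => ?_
    simp [Complex.ext_iff]
  have hL : ∀ i j : Fin 5, Continuous fun L : Matrix (Fin 5) (Fin 5) ℝ => L i j :=
    fun i j => continuous_id.matrix_elem i j
  unfold toCoord
  refine ((Continuous.prodMk (h _ _ ?_ ?_) (h _ _ ?_ ?_)).prodMk (h _ _ ?_ ?_)).prodMk
    (Continuous.prodMk ?_ (Continuous.prodMk ?_ (Continuous.prodMk ?_ ?_)))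
  all_goals fun_prop

lemma toMat_cont : Continuous toMat := by
  refine continuous_matrix fun i j => ?_
  fin_cases i <;> fin_cases j <;> simp [toMat, Dmat] <;> fun_prop

lemma toMat_toCoord {L : Matrix (Fin 5) (Fin 5) ℝ} (h : L ∈ Lo1 5) : toMat (toCoord L) = L := by
  obtain ⟨h1, h2⟩ := h
  have a1 := h1 0
  have a2 := h1 1
  have a3 := h1 2
  have a4 := h1 3
  have a5 := h1 4
  have b1 := h2 0 1 (by decide)
  have b2 := h2 0 2 (by decide)
  have b3 := h2 0 3 (by decide)
  have b4 := h2 0 4 (by decide)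
  have b5 := h2 1 2 (by decide)
  have b6 := h2 1 3 (by decide)
  have b7 := h2 1 4 (by decide)
  have b8 := h2 2 3 (by decide)
  have b9 := h2 2 4 (by decide)
  have b10 := h2 3 4 (by decide)
  ext i j
  fin_cases i <;> fin_cases j <;> simp [toMat, toCoord, Dmat, *] <;> ring

lemma toCoord_toMat (z : VC) : toCoord (toMat z) = z := by
  obtain ⟨⟨⟨⟨α, x⟩, ⟨y, e⟩⟩, ⟨a, d⟩⟩, ⟨b, c, v, w⟩⟩ := z
  simp [toMat, toCoord, Dmat, Complex.ext_iff]
  ring_nf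
  simp

lemma toMat_lo1 (z : VC) : toMat z ∈ Lo1 5 := by
  refine ⟨fun i => ?_, fun i j => ?_⟩
  · fin_cases i <;> simp [toMat, Dmat]
  · fin_cases i <;> fin_cases j <;> simp [toMat, Dmat]

lemma toMat_bru_iff (z : VC) : toMat z ∈ Bru 5 η5 ↔
    (ff1 z ≠ 0 ∧ ff2 z ≠ 0 ∧ ff3 z ≠ 0 ∧ ff4 z ≠ 0) :=
  ⟨fun h => bru_dmat h, fun h => dmat_mem_bru h.1 h.2.1 h.2.2.1 h.2.2.2⟩

lemma ne_of_sg {s f : ℝ} (h : 0 < s * f) : f ≠ 0 := by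
  rintro rfl; simp at h

lemma main_count : Nat.card (ConnectedComponents ↥(BL 5 η5)) = 52 ∧
      ∀ L : ↥(BL 5 η5), ContractibleSpace ↥(connectedComponent L) := by
  have hemb : Topology.IsEmbedding (fun L : ↥(BL 5 η5) => toCoord L.1) := by
    refine Topology.IsEmbedding.of_comp (toCoord_cont.comp continuous_subtype_val) toMat_cont ?_
    have : toMat ∘ (fun L : ↥(BL 5 η5) => toCoord L.1) = Subtype.val := by
      funext L
      exact toMat_toCoord L.2.1
    rw [this]
    exact Topology.IsEmbedding.subtypeVal
  have key := count_lemma (fun L : ↥(BL 5 η5) => toCoord L.1) hemb Bset Bset_isOpen Bset_disj ?_ ?_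
    Bset_contractible
  · refine ⟨key.1.trans ?_, key.2⟩
    simp
  · intro L
    have h := L.2.2
    rw [← toMat_toCoord L.2.1, toMat_bru_iff] at h
    exact Bset_cover _ h.1 h.2.1 h.2.2.1 h.2.2.2
  · rintro i z ⟨⟨h1, h2, h3, h4⟩, -⟩
    exact ⟨⟨toMat z, toMat_lo1 z, (toMat_bru_iff z).mpr
      ⟨ne_of_sg h1, ne_of_sg h2, ne_of_sg h3, ne_of_sg h4⟩⟩, toCoord_toMat z⟩

/-- `BL_η ⊂ Lo¹₅` for the longest element `η ∈ S₅` (the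
intersection of two open big Bruhat cells in general position) has exactly 52
connected components, all of which are contractible. -/
theorem stmt7 :
    Nat.card (ConnectedComponents ↥(BL 5 η5)) = 52 ∧
      ∀ L : ↥(BL 5 η5), ContractibleSpace ↥(connectedComponent L) := by
  exact main_count
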